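/- arXiv:2604.06442 — 2 statements merged into one kernel-verified Lean document; each statement's English description precedes it below -/
import Mathlib

section
/- Let R be a Noetherian commutative ring and f ∈ R a nonzerodivisor, and suppose that R is integrally closed in the localization R[1/f], i.e., every element of R[1/f] that is integral over R lies in the image of the (injective) map R → R[1/f]. Let x ∈ R[1/f]. If for every prime ideal 𝔭 of R of height one with f ∈ 𝔭 the image of x in (R_𝔭)[1/f] lies in the image of R_𝔭 → (R_𝔭)[1/f], then x lies in the image of R → R[1/f]. -/
universe u

/-- If multiplication by `y` preserves an ideal of a Noetherian ring containing an element that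
becomes a unit, then `y` is integral. -/
theorem isIntegral_of_mul_mem_map_ideal {R A : Type*} [CommRing R] [IsNoetherianRing R]
    [CommRing A] [Algebra R A] {I : Ideal R} {f : R} (hfI : f ∈ I)
    (hf : IsUnit (algebraMap R A f)) {y : A}
    (h : ∀ p ∈ I, ∃ q ∈ I, algebraMap R A p * y = algebraMap R A q) : IsIntegral R y := by
  obtain ⟨g, hg⟩ := hf.exists_left_inv
  have hpow : ∀ n : ℕ, ∃ q ∈ I, algebraMap R A f * y ^ n = algebraMap R A q := by
    intro n
    induction n with
    | zero => exact ⟨f, hfI, by simp⟩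
    | succ n ih =>
      obtain ⟨q, hq, hqy⟩ := ih
      obtain ⟨r, hr, hry⟩ := h q hq
      exact ⟨r, hr, by rw [pow_succ, ← mul_assoc, hqy, hry]⟩
  have hle : Subalgebra.toSubmodule (Algebra.adjoin R {y}) ≤ Submodule.span R {g} := by
    rw [Algebra.adjoin_eq_span, ← Submonoid.powers_eq_closure, Submodule.span_le]
    rintro _ ⟨n, rfl⟩
    obtain ⟨q, -, hq⟩ := hpow n
    refine Submodule.mem_span_singleton.2 ⟨q, ?_⟩
    rw [Algebra.smul_def, ← hq]
    linear_combination y ^ n * hg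
  have hfg : (Subalgebra.toSubmodule (Algebra.adjoin R {y})).FG :=
    Submodule.FG.of_le (Submodule.fg_span_singleton g) hle
  exact IsIntegral.of_mem_of_fg _ hfg _ (Algebra.self_mem_adjoin_singleton R y)

/-- If `R` is Noetherian and integrally closed in `A`, a prime of the form `(R : y)` with `y : A`
that contains a nonzerodivisor invertible in `A` has height one. -/
theorem Ideal.height_eq_one_of_mem_iff_mul_mem_range {R A : Type*} [CommRing R]
    [IsNoetherianRing R] [CommRing A] [Algebra R A]
    (hinj : Function.Injective (algebraMap R A))
    (hint : ∀ y : A, IsIntegral R y → y ∈ (algebraMap R A).range)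
    {f : R} (hf : f ∈ nonZeroDivisors R) (hfu : IsUnit (algebraMap R A f))
    {P : Ideal R} [P.IsPrime] (hfP : f ∈ P) {y : A}
    (hy : ∀ r, r ∈ P ↔ algebraMap R A r * y ∈ (algebraMap R A).range) : P.height = 1 := by
  apply le_antisymm
  · have hyR : y ∉ (algebraMap R A).range := fun h ↦
      (Ideal.ne_top_iff_one P).1 Ideal.IsPrime.ne_top' ((hy 1).2 (by simpa using h))
    obtain ⟨p, hp, u, hu, hpu⟩ : ∃ p ∈ P, ∃ u ∉ P, algebraMap R A u = algebraMap R A p * y := by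
      by_contra! hcon
      refine hyR (hint y (isIntegral_of_mul_mem_map_ideal hfP hfu fun p hp ↦ ?_))
      obtain ⟨q, hq⟩ := (hy p).1 hp
      exact ⟨q, by_contra fun hqP ↦ hcon p hp q hqP hq, hq.symm⟩
    refine Ideal.height_le_one_of_isPrincipal_of_mem_minimalPrimes (Ideal.span {p}) P
      ⟨⟨inferInstance, (Ideal.span_singleton_le_iff_mem P).2 hp⟩, fun Q ⟨hQ, hpQ⟩ hQP q hq ↦ ?_⟩
    obtain ⟨r, hr⟩ := (hy q).1 hq
    have huq : u * q = p * r := hinj (by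
      rw [map_mul, map_mul, hpu, hr]
      ring)
    have hmem : u * q ∈ Q :=
      huq ▸ Q.mul_mem_right r ((Ideal.span_singleton_le_iff_mem Q).1 hpQ)
    exact (hQ.mem_or_mem hmem).resolve_left fun h ↦ hu (hQP h)
  · exact (Ideal.one_le_height_span_singleton_of_mem_nonZeroDivisors hf).trans
      (Ideal.height_mono ((Ideal.span_singleton_le_iff_mem P).2 hfP))

/-- If the image of `x : R[1/f]` in `R_P[1/f]` comes from `R_P`, then some `s ∉ P` multiplies `x`
into `R`. -/
theorem Localization.exists_notMem_mul_mem_range_of_awayMap_mem_range {R : Type*} [CommRing R]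
    (f : R) (P : Ideal R) [P.IsPrime] (x : Localization.Away f)
    (hx : Localization.awayMap (algebraMap R (Localization.AtPrime P)) f x ∈
      (algebraMap (Localization.AtPrime P)
        (Localization.Away (algebraMap R (Localization.AtPrime P) f))).range) :
    ∃ s ∉ P, algebraMap R (Localization.Away f) s * x ∈
      (algebraMap R (Localization.Away f)).range := by
  obtain ⟨z, hz⟩ := hx
  obtain ⟨n, b, hb⟩ := IsLocalization.Away.surj f x
  obtain ⟨⟨r, s⟩, hrs⟩ := IsLocalization.surj P.primeCompl z
  have himage := congrArg (Localization.awayMap (algebraMap R (Localization.AtPrime P)) f) hb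
  simp only [map_mul, map_pow, Localization.awayMap, IsLocalization.Away.map,
    IsLocalization.map_eq] at himage hz
  rw [← hz, ← map_pow, ← map_mul] at himage
  obtain ⟨m, hm⟩ := IsLocalization.Away.exists_of_eq
    (algebraMap R (Localization.AtPrime P) f) himage
  have heq : algebraMap R (Localization.AtPrime P) (f ^ m * (r * f ^ n)) =
      algebraMap R (Localization.AtPrime P) (f ^ m * (b * s)) := by
    simp only [map_mul, map_pow] at hrs hm ⊢
    rw [← hrs]
    linear_combination algebraMap R (Localization.AtPrime P) s * hm
  obtain ⟨t, ht⟩ := IsLocalization.exists_of_eq (M := P.primeCompl) heq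
  refine ⟨t * s, P.primeCompl.mul_mem t.2 s.2, t * r, ?_⟩
  have hfu := IsLocalization.Away.algebraMap_isUnit (S := Localization.Away f) f
  have ht' := congrArg (algebraMap R (Localization.Away f)) ht
  apply (hfu.pow (m + n)).mul_left_cancel
  simp only [map_mul, map_pow] at ht' ⊢
  rw [← hb] at ht'
  linear_combination ht'

/-- **Algebraic Hartogs extension.**  Let `R` be a Noetherian commutative ring and `f ∈ R` a
nonzerodivisor such that `R` is integrally closed in `R[1/f]`.  If `x ∈ R[1/f]` is such that,
for every height-one prime `𝔭` of `R` containing `f`, the image of `x` in `(R_𝔭)[1/f]` lies in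
the image of `R_𝔭`, then `x` lies in the image of `R`. -/
theorem statement1 {R : Type u} [CommRing R] [IsNoetherianRing R]
    (f : R) (hf : f ∈ nonZeroDivisors R)
    (hint : ∀ y : Localization.Away f, IsIntegral R y →
      y ∈ (algebraMap R (Localization.Away f)).range)
    (x : Localization.Away f)
    (hx : ∀ (𝔭 : Ideal R) (h𝔭 : 𝔭.IsPrime), Order.height (⟨𝔭, h𝔭⟩ : PrimeSpectrum R) = 1 →
      f ∈ 𝔭 →
      Localization.awayMap (algebraMap R (Localization.AtPrime 𝔭)) f x ∈
        (algebraMap (Localization.AtPrime 𝔭)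
          (Localization.Away (algebraMap R (Localization.AtPrime 𝔭) f))).range) :
    x ∈ (algebraMap R (Localization.Away f)).range := by
  let A := Localization.Away f
  have hinj : Function.Injective (algebraMap R A) :=
    IsLocalization.injective A (Submonoid.powers_le.2 hf)
  have hfu : IsUnit (algebraMap R A f) := IsLocalization.Away.algebraMap_isUnit f
  let N : Submodule R A := LinearMap.range (Algebra.linearMap R A)
  have hcolon : ∀ (y : A) (r : R), r ∈ (⊥ : Submodule R (A ⧸ N)).colon {N.mkQ y} ↔
      algebraMap R A r * y ∈ (algebraMap R A).range := by
    intro y r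
    rw [Submodule.mem_colon_singleton, Submodule.mem_bot, ← map_smul, Submodule.mkQ_apply,
      Submodule.Quotient.mk_eq_zero, Algebra.smul_def]
    rfl
  by_contra hxR
  have hx0 : N.mkQ x ≠ 0 := fun h ↦ hxR ((Submodule.Quotient.mk_eq_zero N).1 h)
  obtain ⟨P, hP, hle⟩ := exists_le_isAssociatedPrime_of_isNoetherianRing R _ hx0
  obtain ⟨hprime, z, hz⟩ := isAssociatedPrime_iff.1 hP
  obtain ⟨y, rfl⟩ := N.mkQ_surjective z
  have hmem : ∀ r, r ∈ P ↔ algebraMap R A r * y ∈ (algebraMap R A).range := fun r ↦ by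
    rw [hz, hcolon]
  obtain ⟨n, b, hb⟩ := IsLocalization.Away.surj f y
  have hfP : f ∈ P := hprime.mem_of_pow_mem n ((hmem _).2 ⟨b, by rw [map_pow, mul_comm, hb]⟩)
  have hheight : P.height = 1 :=
    Ideal.height_eq_one_of_mem_iff_mul_mem_range hinj hint hf hfu hfP hmem
  obtain ⟨s, hs, hsx⟩ := Localization.exists_notMem_mul_mem_range_of_awayMap_mem_range f P x
    (hx P hprime ((PrimeSpectrum.height_eq_orderHeight ⟨P, hprime⟩).symm.trans hheight) hfP)
  exact hs (hle ((hcolon x s).2 hsx))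
end

section
/- Let p be a prime number and let R → R' be a homomorphism of commutative rings such that for every n ≥ 1 the induced ring homomorphism R/p^nR → R'/p^nR' is faithfully flat. Let M be an R-module every element of which is annihilated by some power of p. If M ⊗_R R' = 0, then M = 0. -/
universe u v

/-- The ring homomorphism `R/p^nR → R'/p^nR'` induced by a ring homomorphism `R → R'`
(given as an algebra structure). -/
noncomputable def pPowQuotMap (R : Type u) (R' : Type v) [CommRing R] [CommRing R']
    [Algebra R R'] (p n : ℕ) :
    R ⧸ Ideal.span {(p : R) ^ n} →+* R' ⧸ Ideal.span {(p : R') ^ n} :=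
  Ideal.quotientMap (Ideal.span {(p : R') ^ n}) (algebraMap R R')
    (by
      rw [Ideal.span_le]
      rintro x rfl
      simp only [SetLike.mem_coe, Ideal.mem_comap, map_pow, map_natCast]
      exact Ideal.subset_span rfl)

open TensorProduct in
/-- Let `R/I → R'/J` be a faithfully flat map compatible with `R → R'`. If `N` is an `R`-module
killed by `I`, then `N → N ⊗[R] R'` is injective. -/
theorem eq_zero_of_tmul_one_eq_zero_of_faithfullyFlat_quotient {R R' N : Type*}
    [CommRing R] [CommRing R'] [Algebra R R'] [AddCommGroup N] [Module R N]
    (I : Ideal R) (J : Ideal R') [Algebra (R ⧸ I) (R' ⧸ J)] [IsScalarTower R (R ⧸ I) (R' ⧸ J)]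
    [Module.FaithfullyFlat (R ⧸ I) (R' ⧸ J)] (hN : Module.IsTorsionBySet R N I)
    {x : N} (hx : x ⊗ₜ[R] (1 : R') = 0) : x = 0 := by
  let := hN.module
  have : IsScalarTower R (R ⧸ I) N := hN.isScalarTower
  rw [← Module.FaithfullyFlat.one_tmul_eq_zero_iff (R ⧸ I) N (A := R' ⧸ J)]
  have h := congrArg (TensorProduct.comm (R ⧸ I) N (R' ⧸ J) ∘
    mapOfCompatibleSMul (R ⧸ I) R R N (R' ⧸ J) ∘
    (Ideal.Quotient.mkₐ R J).toLinearMap.lTensor N) hx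
  simpa using h

/-- A finitely generated submodule of an `a`-power torsion module is killed by a single positive
power of `a`. -/
theorem Submodule.FG.exists_pow_smul_eq_zero {R M : Type*} [CommRing R] [AddCommGroup M]
    [Module R M] {a : R} (htors : ∀ m : M, ∃ n : ℕ, a ^ n • m = 0)
    {Q : Submodule R M} (hQ : Q.FG) : ∃ n : ℕ, 1 ≤ n ∧ ∀ x ∈ Q, a ^ n • x = 0 := by
  induction Q, hQ using Submodule.fg_induction with
  | singleton m =>
    obtain ⟨n, hn⟩ := htors m
    refine ⟨n + 1, by omega, fun x hx => ?_⟩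
    obtain ⟨r, rfl⟩ := Submodule.mem_span_singleton.mp hx
    rw [smul_comm, pow_succ', mul_smul, hn, smul_zero, smul_zero]
  | sup Q₁ Q₂ _ _ h₁ h₂ =>
    obtain ⟨n₁, hn₁, h₁⟩ := h₁
    obtain ⟨n₂, -, h₂⟩ := h₂
    refine ⟨n₁ + n₂, by omega, fun x hx => ?_⟩
    obtain ⟨y, hy, z, hz, rfl⟩ := Submodule.mem_sup.mp hx
    rw [smul_add, pow_add, mul_smul, mul_smul, h₂ z hz, smul_comm, h₁ y hy, smul_zero, smul_zero,
      add_zero]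

/-- Let `p` be a prime and `R → R'` a ring homomorphism such that each induced map
`R/p^nR → R'/p^nR'` (for `n ≥ 1`) is faithfully flat.  If `M` is an `R`-module all of whose
elements are killed by a power of `p`, and `M ⊗_R R' = 0`, then `M = 0`. -/
theorem statement6 {R : Type u} {R' : Type v} [CommRing R] [CommRing R'] [Algebra R R']
    (p : ℕ) (hp : p.Prime)
    (hff : ∀ n : ℕ, 1 ≤ n →
      letI : Algebra (R ⧸ Ideal.span {(p : R) ^ n}) (R' ⧸ Ideal.span {(p : R') ^ n}) :=
        (pPowQuotMap R R' p n).toAlgebra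
      Module.FaithfullyFlat (R ⧸ Ideal.span {(p : R) ^ n}) (R' ⧸ Ideal.span {(p : R') ^ n}))
    (M : Type u) [AddCommGroup M] [Module R M]
    (htors : ∀ m : M, ∃ n : ℕ, (p : R) ^ n • m = 0)
    (hM : Subsingleton (TensorProduct R M R')) :
    Subsingleton M := by
  refine subsingleton_of_forall_eq 0 fun m => ?_
  obtain ⟨Q, hPQ, hQ, h⟩ := TensorProduct.eq_zero_of_fg_of_subtype_eq_zero (R := R) (N := R')
    (Submodule.fg_span_singleton m)
    (t := TensorProduct.tmul R ⟨m, Submodule.mem_span_singleton_self m⟩ 1) (Subsingleton.elim _ _)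
  obtain ⟨n, hn, hQn⟩ := hQ.exists_pow_smul_eq_zero htors
  let : Algebra (R ⧸ Ideal.span {(p : R) ^ n}) (R' ⧸ Ideal.span {(p : R') ^ n}) :=
    (pPowQuotMap R R' p n).toAlgebra
  have : IsScalarTower R (R ⧸ Ideal.span {(p : R) ^ n}) (R' ⧸ Ideal.span {(p : R') ^ n}) :=
    IsScalarTower.of_algebraMap_eq fun _ => rfl
  have := hff n hn
  have htor : Module.IsTorsionBySet R Q (Ideal.span {(p : R) ^ n} : Ideal R) := by
    rw [Module.isTorsionBySet_span_singleton_iff]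
    exact fun x => Subtype.ext (hQn x x.2)
  rw [LinearMap.rTensor_tmul] at h
  exact congrArg Subtype.val (eq_zero_of_tmul_one_eq_zero_of_faithfullyFlat_quotient
    (Ideal.span {(p : R) ^ n}) (Ideal.span {(p : R') ^ n}) htor h)
end
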